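/- Every connected finite simple graph G with maximum degree at most 6 admits a lattice drawing in ℤ³. Moreover, if G is bipartite, the lattice drawing can be chosen so that for every edge the two endpoint cubes of its wire have opposite parity (equivalently, every wire has even length). -/

import Mathlib

/-- Two cubes of `ℤ^d` are adjacent if they differ by a standard basis vector. -/
def CubeAdj {d : ℕ} (a b : Fin d → ℤ) : Prop :=
  ∃ i : Fin d, a = b + Pi.single i 1 ∨ b = a + Pi.single i 1

/-- A wire: a finite sequence of distinct cubes in which two cubes are adjacent
iff they are consecutive. -/
def IsWire (w : List (Fin 3 → ℤ)) : Prop :=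
  w.Nodup ∧ ∀ i j : Fin w.length,
    CubeAdj (w.get i) (w.get j) ↔ ((i : ℕ) + 1 = (j : ℕ) ∨ (j : ℕ) + 1 = (i : ℕ))

/-- `c` and `c'` are consecutive cubes of the list `w` (in either order). -/
def ConsecIn (w : List (Fin 3 → ℤ)) (c c' : Fin 3 → ℤ) : Prop :=
  ∃ i : ℕ, (w[i]? = some c ∧ w[i + 1]? = some c') ∨
           (w[i]? = some c' ∧ w[i + 1]? = some c)

/-- A lattice drawing of a simple graph `G` in `ℤ³`: an injective placement of the
vertices together with, for each edge `uv`, a wire with endpoints `f u`, `f v`, such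
that two cubes of the union of the wires are adjacent iff they are consecutive cubes
of exactly one of the wires. -/
structure LatticeDrawing {V : Type*} (G : SimpleGraph V) where
  f : V → (Fin 3 → ℤ)
  f_inj : Function.Injective f
  wire : G.edgeSet → List (Fin 3 → ℤ)
  wire_isWire : ∀ e, IsWire (wire e)
  wire_endpoints : ∀ e : G.edgeSet, ∃ u v : V, e.val = s(u, v) ∧
    (wire e).head? = some (f u) ∧ (wire e).getLast? = some (f v)
  proper : ∀ c c' : Fin 3 → ℤ, (∃ e, c ∈ wire e) → (∃ e, c' ∈ wire e) →
    (CubeAdj c c' ↔ ∃! e : G.edgeSet, ConsecIn (wire e) c c')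

/-!
The wires run on the lines of a sparse grid, where all coordinates but one lie in sets without
consecutive integers. Cubes on the grid are adjacent only along its lines, and every unit edge of
the grid has an end that is no crossing, so that a path visiting this end uses the edge. Hence
edge-disjoint paths in the grid, joining the vertices at crossings, form a lattice drawing; they may
well share other crossings.

The vertices lie on the `x`-axis. The `k`-th edge of the graph owns lines at distance `2 * (k + 1)`
from the axis, and a vertex has six edge-disjoint ports, along each of which it can reach the lines
of every edge. Along a wire the parity alternates, so in the bipartite case it is enough to let the
colour of a vertex determine the parity of its `x`-coordinate.
-/

open Function

theorem mk_mem_edges_of_encard_neighborSet_le_two {α : Type*} {H : SimpleGraph α} {u v m x : α}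
    {p : H.Walk u v} (hp : p.IsPath) (hm : m ∈ p.support) (hu : m ≠ u) (hv : m ≠ v)
    (hdeg : (H.neighborSet m).encard ≤ 2) (hx : H.Adj m x) : s(m, x) ∈ p.edges := by
  obtain ⟨i, rfl, hi⟩ := SimpleGraph.Walk.mem_support_iff_exists_getVert.1 hm
  have hi₀ : i ≠ 0 := by
    rintro rfl
    exact hu p.getVert_zero
  have hi₁ : i < p.length := by
    refine hi.lt_of_ne ?_
    rintro rfl
    exact hv p.getVert_length
  have htwo := hp.ncard_neighborSet_toSubgraph_internal_eq_two hi₀ hi₁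
  have hfin := Set.finite_of_ncard_pos (htwo ▸ two_pos)
  have hall : p.toSubgraph.neighborSet (p.getVert i) = H.neighborSet (p.getVert i) := by
    refine hfin.eq_of_subset_of_encard_le (p.toSubgraph.neighborSet_subset _) ?_
    rwa [← hfin.cast_ncard_eq, htwo]
  exact SimpleGraph.Walk.adj_toSubgraph_iff_mem_edges.1 (hall.ge hx)

theorem consecIn_get_iff {w : List (Fin 3 → ℤ)} (hw : w.Nodup) (i j : Fin w.length) :
    ConsecIn w (w.get i) (w.get j) ↔ (i : ℕ) + 1 = j ∨ (j : ℕ) + 1 = i := by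
  have hget (k : ℕ) (l : Fin w.length) : w[k]? = some (w.get l) ↔ k = l := by
    grind [List.Nodup.getElem_inj_iff]
  simp only [ConsecIn, hget]
  grind

theorem consecIn_support_iff {H : SimpleGraph (Fin 3 → ℤ)} {a b c c' : Fin 3 → ℤ}
    (p : H.Walk a b) : ConsecIn p.support c c' ↔ s(c, c') ∈ p.edges := by
  have hget (i : ℕ) (x : Fin 3 → ℤ) :
      p.support[i]? = some x ↔ i < p.length + 1 ∧ p.getVert i = x := by
    grind [SimpleGraph.Walk.support_getElem_eq_getVert]
  simp only [ConsecIn, hget, SimpleGraph.Walk.mk_mem_edges_iff_exists, Sym2.eq_iff]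
  grind

theorem isWire_support {H : SimpleGraph (Fin 3 → ℤ)} {a b : Fin 3 → ℤ} {p : H.Walk a b}
    (hp : p.IsPath) (h : ∀ c ∈ p.support, ∀ c' ∈ p.support, CubeAdj c c' ↔ s(c, c') ∈ p.edges) :
    IsWire p.support :=
  ⟨hp.support_nodup, fun i j => by
    rw [h _ (List.get_mem _ i) _ (List.get_mem _ j), ← consecIn_support_iff,
      consecIn_get_iff hp.support_nodup]⟩

namespace LatticeDrawing

variable {V : Type*} {G : SimpleGraph V} {f : V → Fin 3 → ℤ}
  {A : G.edgeSet → SimpleGraph (Fin 3 → ℤ)}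

/-- The lattice drawing whose wires are the supports of the paths `p e` in edge-disjoint graphs
`A e` of adjacent cubes, provided that each adjacency on the paths is an edge of one of them. -/
def ofPaths {src tgt : G.edgeSet → V} (hf : Injective f) (hst : ∀ e, e.val = s(src e, tgt e))
    (hA : ∀ e c c', (A e).Adj c c' → CubeAdj c c') (hdisj : Pairwise (Disjoint on A))
    (p : ∀ e, (A e).Walk (f (src e)) (f (tgt e))) (hp : ∀ e, (p e).IsPath)
    (hind : ∀ e e', ∀ c ∈ (p e).support, ∀ c' ∈ (p e').support, CubeAdj c c' →
      s(c, c') ∈ (p e).edges ∨ s(c, c') ∈ (p e').edges) : LatticeDrawing G where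
  f := f
  f_inj := hf
  wire e := (p e).support
  wire_isWire e := isWire_support (hp e) fun c hc c' hc' =>
    ⟨fun h => (hind e e c hc c' hc' h).elim id id,
      fun h => hA e _ _ ((p e).adj_of_mem_edges h)⟩
  wire_endpoints e := ⟨src e, tgt e, hst e, by
    simp [List.head?_eq_some_head], by simp [List.getLast?_eq_some_getLast]⟩
  proper := by
    rintro c c' ⟨e, hc⟩ ⟨e', hc'⟩
    simp only [consecIn_support_iff]
    constructor
    · intro h
      obtain ⟨e₀, he₀⟩ : ∃ e₀, s(c, c') ∈ (p e₀).edges :=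
        (hind e e' c hc c' hc' h).elim (fun h => ⟨e, h⟩) fun h => ⟨e', h⟩
      refine ⟨e₀, he₀, fun e₁ he₁ => by_contra fun hne => ?_⟩
      exact SimpleGraph.disjoint_left.1 (hdisj hne) c c' ((p e₁).adj_of_mem_edges he₁)
        ((p e₀).adj_of_mem_edges he₀)
    · rintro ⟨e₀, he₀, -⟩
      exact hA e₀ _ _ ((p e₀).adj_of_mem_edges he₀)

theorem exists_of_edgeDisjoint (hf : Injective f) {H : SimpleGraph (Fin 3 → ℤ)}
    (hH : ∀ c ∈ H.support, ∀ c' ∈ H.support, H.Adj c c' ↔ CubeAdj c c')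
    (hthin : ∀ c c', H.Adj c c' →
      ∃ m ∈ s(c, c'), m ∉ Set.range f ∧ (H.neighborSet m).encard ≤ 2)
    (hle : ∀ e, A e ≤ H) (hdisj : Pairwise (Disjoint on A))
    (hreach : ∀ u v (h : G.Adj u v), (A ⟨s(u, v), h⟩).Reachable (f u) (f v)) :
    ∃ D : LatticeDrawing G, D.f = f := by
  have hpath (e : G.edgeSet) : ∃ u v, e.val = s(u, v) ∧
      ∃ p : (A e).Walk (f u) (f v), p.IsPath := by
    obtain ⟨⟨u, v⟩, h⟩ := e
    exact ⟨u, v, rfl, (hreach u v h).exists_isPath⟩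
  choose src tgt hst p hp using hpath
  have hadj {c c'} (h : H.Adj c c') : CubeAdj c c' :=
    (hH c ⟨c', h⟩ c' ⟨c, h.symm⟩).1 h
  have hsupp (e) (c) (hc : c ∈ (p e).support) : c ∈ H.support := by
    have hne : f (src e) ≠ f (tgt e) := fun h =>
      ((SimpleGraph.mem_edgeSet G).1 (hst e ▸ e.2)).ne (hf h)
    exact SimpleGraph.support_mono (hle e)
      (SimpleGraph.mem_support_of_mem_walk_support (p e) (SimpleGraph.Walk.not_nil_of_ne hne) hc)
  have hthrough {e m x} (hm : m ∈ (p e).support) (hmf : m ∉ Set.range f)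
      (hdeg : (H.neighborSet m).encard ≤ 2) (hx : H.Adj m x) : s(m, x) ∈ (p e).edges := by
    rw [← SimpleGraph.Walk.edges_mapLe_eq_edges (hle e)]
    exact mk_mem_edges_of_encard_neighborSet_le_two ((hp e).mapLe (hle e)) (by simpa using hm)
      (fun h => hmf ⟨_, h.symm⟩) (fun h => hmf ⟨_, h.symm⟩) hdeg hx
  refine ⟨ofPaths hf hst (fun e c c' h => hadj (hle e h)) hdisj p hp ?_, rfl⟩
  intro e e' c hc c' hc' h
  have hcc' : H.Adj c c' := (hH c (hsupp e c hc) c' (hsupp e' c' hc')).2 h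
  obtain ⟨m, hm, hmf, hdeg⟩ := hthin c c' hcc'
  obtain rfl | rfl := Sym2.mem_iff.1 hm
  · exact Or.inl (hthrough hc hmf hdeg hcc')
  · exact Or.inr (Sym2.eq_swap ▸ hthrough hc' hmf hdeg hcc'.symm)

end LatticeDrawing

section UnitEdges

variable {d : ℕ}

/-- The unit edge from the cube `q.1` in the positive direction `q.2`; sets of unit edges are
encoded as sets of such pairs `q`. -/
def unitEdge (q : (Fin d → ℤ) × Fin d) : Sym2 (Fin d → ℤ) :=
  s(q.1, q.1 + Pi.single q.2 1)

theorem unitEdge_injective : Injective (unitEdge (d := d)) := by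
  rintro ⟨c, i⟩ ⟨c', j⟩ h
  obtain ⟨hc, hi⟩ | ⟨hc, hc'⟩ := Sym2.eq_iff.1 h
  · obtain rfl : c = c' := hc
    have hij : (1 : ℤ) = (Pi.single j 1 : Fin d → ℤ) i := by
      simpa using congrFun (add_left_cancel hi) i
    obtain rfl : i = j := by
      by_contra hne
      simp [hne] at hij
    rfl
  · have hcc : c i + 1 + (Pi.single j 1 : Fin d → ℤ) i = c i := by
      have h₁ := congrFun hc i
      have h₂ := congrFun hc' i
      simp only [Pi.add_apply, Pi.single_eq_same] at h₁ h₂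
      omega
    have hnonneg : 0 ≤ (Pi.single j 1 : Fin d → ℤ) i :=
      (Pi.single_nonneg.2 zero_le_one : (0 : Fin d → ℤ) ≤ Pi.single j 1) i
    omega

/-- The graph on `ℤ^d` with the unit edges `E`. -/
def unitEdgeGraph (E : Set ((Fin d → ℤ) × Fin d)) : SimpleGraph (Fin d → ℤ) :=
  SimpleGraph.fromEdgeSet (unitEdge '' E)

theorem unitEdgeGraph_mono {E E' : Set ((Fin d → ℤ) × Fin d)} (h : E ⊆ E') :
    unitEdgeGraph E ≤ unitEdgeGraph E' :=
  SimpleGraph.fromEdgeSet_mono (Set.image_mono h)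

theorem disjoint_unitEdgeGraph {E E' : Set ((Fin d → ℤ) × Fin d)} (h : Disjoint E E') :
    Disjoint (unitEdgeGraph E) (unitEdgeGraph E') := by
  rw [unitEdgeGraph, SimpleGraph.fromEdgeSet_disjoint]
  refine ((Set.disjoint_image_iff unitEdge_injective).2 h).mono_right ?_
  simp [unitEdgeGraph]

theorem unitEdgeGraph_adj {E : Set ((Fin d → ℤ) × Fin d)} {c c' : Fin d → ℤ} :
    (unitEdgeGraph E).Adj c c' ↔
      ∃ i, (c, i) ∈ E ∧ c' = c + Pi.single i 1 ∨ (c', i) ∈ E ∧ c = c' + Pi.single i 1 := by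
  rw [unitEdgeGraph, SimpleGraph.fromEdgeSet_adj]
  constructor
  · rintro ⟨⟨⟨b, i⟩, hb, hbi⟩, -⟩
    obtain ⟨rfl, rfl⟩ | ⟨rfl, rfl⟩ := Sym2.eq_iff.1 hbi
    · exact ⟨i, .inl ⟨hb, rfl⟩⟩
    · exact ⟨i, .inr ⟨hb, rfl⟩⟩
  · rintro ⟨i, ⟨hi, rfl⟩ | ⟨hi, rfl⟩⟩
    · exact ⟨⟨_, hi, rfl⟩, by simp⟩
    · exact ⟨⟨_, hi, Sym2.eq_swap⟩, by simp⟩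

theorem reachable_unitEdgeGraph_of_line {E : Set ((Fin d → ℤ) × Fin d)} {c c' : Fin d → ℤ}
    (i : Fin d) (hcc' : ∀ j ≠ i, c j = c' j)
    (hE : ∀ b : Fin d → ℤ, (∀ j ≠ i, b j = c j) → min (c i) (c' i) ≤ b i →
      b i < max (c i) (c' i) → (b, i) ∈ E) :
    (unitEdgeGraph E).Reachable c c' := by
  wlog hle : c i ≤ c' i generalizing c c'
  · refine (this (fun j hj => (hcc' j hj).symm) (fun b hb => ?_) (le_of_not_ge hle)).symm
    rw [min_comm, max_comm]
    exact hE b fun j hj => (hb j hj).trans (hcc' j hj).symm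
  rw [min_eq_left hle, max_eq_right hle] at hE
  have hup (t : ℤ) (ht : c i ≤ t) :
      t ≤ c' i → (unitEdgeGraph E).Reachable c (update c i t) := by
    induction t, ht using Int.leInduction with
    | base => simp
    | succ t ht ih =>
      intro ht'
      refine (ih (by omega)).trans
        (unitEdgeGraph_adj.2 ⟨i, .inl ⟨?_, ?_⟩⟩ : (unitEdgeGraph E).Adj _ _).reachable
      · exact hE _ (fun j hj => by simp [hj]) (by simpa using ht)
          (by simpa using Int.add_one_le_iff.1 ht')
      · ext j
        obtain rfl | hj := eq_or_ne j i
        · simp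
        · simp [hj]
  convert hup (c' i) hle le_rfl
  ext j
  obtain rfl | hj := eq_or_ne j i
  · simp
  · simp [hj, hcc' j hj]

end UnitEdges

section Grid

variable {d : ℕ} {P : Fin d → Set ℤ} {c c' : Fin d → ℤ}

/-- A set of integers is sparse if it contains no two consecutive integers. -/
def IsSparse (s : Set ℤ) : Prop :=
  ∀ t ∈ s, t + 1 ∉ s

/-- The unit edges of the grid whose lines in direction `i` are given by values in `P j` for the
coordinates `j ≠ i`. -/
def gridEdges (P : Fin d → Set ℤ) : Set ((Fin d → ℤ) × Fin d) :=
  {q | ∀ j ≠ q.2, q.1 j ∈ P j}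

/-- The graph formed by the lines of the grid given by `P`. -/
abbrev gridGraph (P : Fin d → Set ℤ) : SimpleGraph (Fin d → ℤ) :=
  unitEdgeGraph (gridEdges P)

theorem exists_forall_mem_of_mem_support_gridGraph (hc : c ∈ (gridGraph P).support) :
    ∃ i, ∀ j ≠ i, c j ∈ P j := by
  obtain ⟨c', h⟩ := hc
  obtain ⟨i, ⟨hi, -⟩ | ⟨hi, rfl⟩⟩ := unitEdgeGraph_adj.1 h
  · exact ⟨i, hi⟩
  · exact ⟨i, fun j hj => by simpa [hj] using hi j hj⟩

theorem mem_gridEdges_of_mem_support (hP : ∀ i, IsSparse (P i)) {i : Fin d}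
    (hc : c ∈ (gridGraph P).support) (hc' : c + Pi.single i 1 ∈ (gridGraph P).support) :
    (c, i) ∈ gridEdges P := by
  obtain ⟨k, hk⟩ := exists_forall_mem_of_mem_support_gridGraph hc
  obtain ⟨l, hl⟩ := exists_forall_mem_of_mem_support_gridGraph hc'
  obtain rfl | hik := eq_or_ne i k
  · exact hk
  obtain rfl | hil := eq_or_ne i l
  · exact fun j hj => by simpa [hj] using hl j hj
  · exact absurd (by simpa using hl i hil) (hP i _ (hk i hik))

theorem gridGraph_adj_iff_cubeAdj (hP : ∀ i, IsSparse (P i))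
    (hc : c ∈ (gridGraph P).support) (hc' : c' ∈ (gridGraph P).support) :
    (gridGraph P).Adj c c' ↔ CubeAdj c c' := by
  rw [unitEdgeGraph_adj]
  constructor
  · rintro ⟨i, ⟨-, h⟩ | ⟨-, h⟩⟩
    exacts [⟨i, .inr h⟩, ⟨i, .inl h⟩]
  · rintro ⟨i, rfl | rfl⟩
    exacts [⟨i, .inr ⟨mem_gridEdges_of_mem_support hP hc' hc, rfl⟩⟩,
      ⟨i, .inl ⟨mem_gridEdges_of_mem_support hP hc hc', rfl⟩⟩]

theorem encard_neighborSet_gridGraph_le_two {i : Fin d} (hc : c i ∉ P i) :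
    ((gridGraph P).neighborSet c).encard ≤ 2 := by
  suffices h : (gridGraph P).neighborSet c ⊆ {c + Pi.single i 1, c - Pi.single i 1} from
    (Set.encard_le_encard h).trans ((Set.encard_insert_le _ _).trans (by simp [one_add_one_eq_two]))
  intro x hx
  obtain ⟨j, ⟨hj, rfl⟩ | ⟨hj, rfl⟩⟩ := unitEdgeGraph_adj.1 hx
  · obtain rfl : i = j := by_contra fun hij => hc (hj i hij)
    exact .inl rfl
  · obtain rfl : i = j := by_contra fun hij => hc (by simpa [hij] using hj i hij)
    exact .inr (add_sub_cancel_right x _).symm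

theorem exists_mem_notMem_of_gridGraph_adj (hP : ∀ i, IsSparse (P i))
    (h : (gridGraph P).Adj c c') : ∃ m ∈ s(c, c'), ∃ i, m i ∉ P i := by
  have hend (b : Fin d → ℤ) (i : Fin d) : b i ∉ P i ∨ (b + Pi.single i 1 : Fin d → ℤ) i ∉ P i := by
    rw [← imp_iff_not_or, Pi.add_apply, Pi.single_eq_same]
    exact hP i (b i)
  obtain ⟨i, ⟨-, rfl⟩ | ⟨-, rfl⟩⟩ := unitEdgeGraph_adj.1 h
  · obtain hi | hi := hend c i
    exacts [⟨c, by simp, i, hi⟩, ⟨_, by simp, i, hi⟩]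
  · obtain hi | hi := hend c' i
    exacts [⟨c', by simp, i, hi⟩, ⟨_, by simp, i, hi⟩]

end Grid

theorem LatticeDrawing.exists_of_disjoint_gridEdges {V : Type*} {G : SimpleGraph V}
    {f : V → Fin 3 → ℤ} (hf : Injective f) {P : Fin 3 → Set ℤ}
    (hP : ∀ i, IsSparse (P i)) (hfP : ∀ v i, f v i ∈ P i)
    {E : G.edgeSet → Set ((Fin 3 → ℤ) × Fin 3)} (hE : ∀ e, E e ⊆ gridEdges P)
    (hdisj : Pairwise (Disjoint on E))
    (hreach : ∀ u v (h : G.Adj u v), (unitEdgeGraph (E ⟨s(u, v), h⟩)).Reachable (f u) (f v)) :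
    ∃ D : LatticeDrawing G, D.f = f := by
  refine exists_of_edgeDisjoint hf (H := gridGraph P)
    (fun c hc c' hc' => gridGraph_adj_iff_cubeAdj hP hc hc') (fun c c' h => ?_)
    (fun e => unitEdgeGraph_mono (hE e))
    (fun e e' hne => disjoint_unitEdgeGraph (hdisj hne)) hreach
  obtain ⟨m, hm, i, hi⟩ := exists_mem_notMem_of_gridGraph_adj hP h
  refine ⟨m, hm, ?_, encard_neighborSet_gridGraph_le_two hi⟩
  rintro ⟨v, rfl⟩
  exact hi (hfP v i)

section Tracks

variable {X : Set ℤ} {h a b y z : ℤ}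

/-- The track of radius `h`: the lines `y = ±h` and `z = ±h` of each slice `x ∈ X`, and the line
`y = 0`, `z = h`, which connects the slices. -/
def trackEdges (X : Set ℤ) (h : ℤ) : Set ((Fin 3 → ℤ) × Fin 3) :=
  {q | q.2 = 0 ∧ q.1 1 = 0 ∧ q.1 2 = h ∨ q.2 = 1 ∧ q.1 0 ∈ X ∧ |q.1 2| = h ∨
    q.2 = 2 ∧ q.1 0 ∈ X ∧ |q.1 1| = h}

/-- The six ports of the cube `(a, 0, 0)`, each of which leads to the tracks of all radii: the rays
in the directions `±z` and `±y`, and in the directions `±x` two steps followed by a line parallel to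
the `z`-axis. -/
def portEdges (a : ℤ) : Fin 6 → Set ((Fin 3 → ℤ) × Fin 3)
  | 0 => {q | q.2 = 2 ∧ q.1 0 = a ∧ q.1 1 = 0 ∧ 0 ≤ q.1 2}
  | 1 => {q | q.2 = 2 ∧ q.1 0 = a ∧ q.1 1 = 0 ∧ q.1 2 < 0}
  | 2 => {q | q.2 = 1 ∧ q.1 0 = a ∧ q.1 2 = 0 ∧ 0 ≤ q.1 1}
  | 3 => {q | q.2 = 1 ∧ q.1 0 = a ∧ q.1 2 = 0 ∧ q.1 1 < 0}
  | 4 => {q | q.2 = 0 ∧ q.1 1 = 0 ∧ q.1 2 = 0 ∧ a ≤ q.1 0 ∧ q.1 0 < a + 2 ∨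
      q.2 = 2 ∧ q.1 0 = a + 2 ∧ q.1 1 = 0}
  | 5 => {q | q.2 = 0 ∧ q.1 1 = 0 ∧ q.1 2 = 0 ∧ a - 2 ≤ q.1 0 ∧ q.1 0 < a ∨
      q.2 = 2 ∧ q.1 0 = a - 2 ∧ q.1 1 = 0}

theorem disjoint_trackEdges {h' : ℤ} (hh : h ≠ h') :
    Disjoint (trackEdges X h) (trackEdges X h') := by
  simp only [Set.disjoint_left, trackEdges, Set.mem_ofPred_eq]
  grind

theorem disjoint_trackEdges_portEdges (hh : h ≠ 0) (p : Fin 6) :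
    Disjoint (trackEdges X h) (portEdges a p) := by
  rw [Set.disjoint_left]
  fin_cases p <;> simp only [trackEdges, portEdges, Set.mem_ofPred_eq] <;> grind

theorem disjoint_portEdges {p q : Fin 6} (hab : 4 < |a - b| ∨ a = b ∧ p ≠ q) :
    Disjoint (portEdges a p) (portEdges b q) := by
  rw [Set.disjoint_left]
  fin_cases p <;> fin_cases q <;> simp only [portEdges, Set.mem_ofPred_eq] <;> grind

theorem reachable_trackEdges (hh : 0 ≤ h) (hb : b ∈ X) (hyz : |y| = h ∨ |z| = h) :
    (unitEdgeGraph (trackEdges X h)).Reachable ![b, y, z] ![0, 0, h] := by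
  wlog hy : |y| = h generalizing y
  · refine .trans (reachable_unitEdgeGraph_of_line (c' := ![b, h, z]) 1 ?_ ?_)
      (this (.inl (abs_of_nonneg hh)) (abs_of_nonneg hh))
    · simp [Fin.forall_fin_succ]
    · simp +contextual [Fin.forall_fin_succ, trackEdges, hb, hyz.resolve_left hy]
  have h₁ : (unitEdgeGraph (trackEdges X h)).Reachable ![b, y, z] ![b, y, h] := by
    refine reachable_unitEdgeGraph_of_line 2 ?_ ?_
    · simp [Fin.forall_fin_succ]
    · simp +contextual [Fin.forall_fin_succ, trackEdges, hb, hy]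
  have h₂ : (unitEdgeGraph (trackEdges X h)).Reachable ![b, y, h] ![b, 0, h] := by
    refine reachable_unitEdgeGraph_of_line 1 ?_ ?_
    · simp [Fin.forall_fin_succ]
    · simp +contextual [Fin.forall_fin_succ, trackEdges, hb, abs_of_nonneg hh]
  have h₃ : (unitEdgeGraph (trackEdges X h)).Reachable ![b, 0, h] ![0, 0, h] := by
    refine reachable_unitEdgeGraph_of_line 0 ?_ ?_
    · simp [Fin.forall_fin_succ]
    · simp +contextual [Fin.forall_fin_succ, trackEdges]
  exact h₁.trans (h₂.trans h₃)

theorem exists_reachable_portEdges (hh : 0 ≤ h) (p : Fin 6) :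
    ∃ b ∈ ({a - 2, a, a + 2} : Set ℤ), ∃ y z, (|y| = h ∨ |z| = h) ∧
      (unitEdgeGraph (portEdges a p)).Reachable ![a, 0, 0] ![b, y, z] := by
  have hray (i : Fin 3) {c c' : Fin 3 → ℤ} := reachable_unitEdgeGraph_of_line
    (E := portEdges a p) (c := c) (c' := c') i
  fin_cases p
  · refine ⟨a, by simp, 0, h, by simp [abs_of_nonneg hh], hray 2 ?_ ?_⟩
    all_goals simp +contextual [Fin.forall_fin_succ, portEdges, hh]
  · refine ⟨a, by simp, 0, -h, by simp [abs_of_nonneg hh], hray 2 ?_ ?_⟩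
    all_goals simp +contextual [Fin.forall_fin_succ, portEdges, hh]
  · refine ⟨a, by simp, h, 0, by simp [abs_of_nonneg hh], hray 1 ?_ ?_⟩
    all_goals simp +contextual [Fin.forall_fin_succ, portEdges, hh]
  · refine ⟨a, by simp, -h, 0, by simp [abs_of_nonneg hh], hray 1 ?_ ?_⟩
    all_goals simp +contextual [Fin.forall_fin_succ, portEdges, hh]
  · refine ⟨a + 2, by simp, 0, h, by simp [abs_of_nonneg hh],
      .trans (hray 0 (c' := ![a + 2, 0, 0]) ?_ ?_) (hray 2 ?_ ?_)⟩
    all_goals simp +contextual [Fin.forall_fin_succ, portEdges]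
  · refine ⟨a - 2, by simp, 0, h, by simp [abs_of_nonneg hh],
      .trans (hray 0 (c' := ![a - 2, 0, 0]) ?_ ?_) (hray 2 ?_ ?_)⟩
    all_goals simp +contextual [Fin.forall_fin_succ, portEdges]

theorem reachable_trackEdges_union_portEdges (hh : 0 ≤ h)
    (hX : {a - 2, a, a + 2} ⊆ X) (p : Fin 6) :
    (unitEdgeGraph (trackEdges X h ∪ portEdges a p)).Reachable ![a, 0, 0] ![0, 0, h] := by
  obtain ⟨b, hb, y, z, hyz, hp⟩ := exists_reachable_portEdges (a := a) hh p
  exact (hp.mono (unitEdgeGraph_mono Set.subset_union_right)).trans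
    ((reachable_trackEdges hh (hX hb) hyz).mono (unitEdgeGraph_mono Set.subset_union_left))

end Tracks

section Routes

variable {V : Type*} {G : SimpleGraph V}

/-- The grid with `x`-coordinates in `X` and even `y`- and `z`-coordinates. -/
def axisGrid (X : Set ℤ) : Fin 3 → Set ℤ :=
  ![X, {t | Even t}, {t | Even t}]

theorem axisGrid_sparse {X : Set ℤ} (hX : IsSparse X) (i : Fin 3) : IsSparse (axisGrid X i) := by
  have heven : IsSparse {t : ℤ | Even t} := fun t ht => by simpa [Int.even_add_one] using ht
  fin_cases i
  exacts [hX, heven, heven]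

theorem mem_gridEdges_axisGrid {X : Set ℤ} {c : Fin 3 → ℤ} {i : Fin 3} :
    (c, i) ∈ gridEdges (axisGrid X) ↔
      (0 ≠ i → c 0 ∈ X) ∧ (1 ≠ i → Even (c 1)) ∧ (2 ≠ i → Even (c 2)) := by
  simp [gridEdges, axisGrid, Fin.forall_fin_succ]

theorem trackEdges_subset_gridEdges {X : Set ℤ} {h : ℤ} (hh : Even h) :
    trackEdges X h ⊆ gridEdges (axisGrid X) := by
  rintro ⟨c, i⟩ hq
  simp only [trackEdges, Set.mem_ofPred_eq] at hq
  rw [mem_gridEdges_axisGrid]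
  grind [even_abs]

theorem portEdges_subset_gridEdges {X : Set ℤ} {a : ℤ} (hX : {a - 2, a, a + 2} ⊆ X) (p : Fin 6) :
    portEdges a p ⊆ gridEdges (axisGrid X) := by
  simp only [Set.insert_subset_iff, Set.singleton_subset_iff] at hX
  rintro ⟨c, i⟩ hq
  rw [mem_gridEdges_axisGrid]
  fin_cases p <;> simp only [portEdges, Set.mem_ofPred_eq] at hq <;> grind

/-- The `x`-coordinates used by the ports of the cubes `(x v, 0, 0)`. -/
def columns (x : V → ℤ) : Set ℤ :=
  ⋃ v, {x v - 2, x v, x v + 2}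

theorem subset_columns (x : V → ℤ) (v : V) : {x v - 2, x v, x v + 2} ⊆ columns x :=
  Set.subset_iUnion (fun v => ({x v - 2, x v, x v + 2} : Set ℤ)) v

theorem columns_sparse {x : V → ℤ} (hx : Pairwise fun u v => 6 ≤ |x u - x v|) :
    IsSparse (columns x) := by
  simp only [IsSparse, columns, Set.mem_iUnion, Set.mem_insert_iff, Set.mem_singleton_iff]
  rintro t ⟨u, hu⟩ ⟨v, hv⟩
  obtain rfl | huv := eq_or_ne u v
  · omega
  · have := hx huv
    grind

/-- The unit edges at the disposal of the wire of `e`: the track of radius `h`, and for each end `u`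
of `e` the port which `u` reserves for the other end. -/
def routeEdges (x : V → ℤ) (port : V → V → Fin 6) (h : ℤ) (e : Sym2 V) :
    Set ((Fin 3 → ℤ) × Fin 3) :=
  trackEdges (columns x) h ∪ ⋃ (u) (w) (_ : e = s(u, w)), portEdges (x u) (port u w)

theorem disjoint_routeEdges {x : V → ℤ} (hx : Pairwise fun u v => 4 < |x u - x v|)
    {port : V → V → Fin 6} (hport : ∀ u, Set.InjOn (port u) (G.neighborSet u))
    {h h' : ℤ} (hh : h ≠ 0) (hh' : h' ≠ 0) (hne : h ≠ h') {e e' : Sym2 V} (he : e ∈ G.edgeSet)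
    (he' : e' ∈ G.edgeSet) (hee : e ≠ e') :
    Disjoint (routeEdges x port h e) (routeEdges x port h' e') := by
  simp only [routeEdges, Set.disjoint_union_left, Set.disjoint_union_right,
    Set.disjoint_iUnion_left, Set.disjoint_iUnion_right]
  refine ⟨⟨disjoint_trackEdges hne, fun _ _ _ => (disjoint_trackEdges_portEdges hh' _).symm⟩, ?_⟩
  rintro u' w' rfl
  refine ⟨disjoint_trackEdges_portEdges hh _, ?_⟩
  rintro u w rfl
  obtain rfl | huu := eq_or_ne u u'
  · exact disjoint_portEdges (.inr ⟨rfl, fun hp => hee (congrArg _ (hport u he he' hp))⟩)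
  · exact disjoint_portEdges (.inl (hx huu))

theorem routeEdges_subset_gridEdges (x : V → ℤ) (port : V → V → Fin 6) {h : ℤ} (hh : Even h)
    (e : Sym2 V) : routeEdges x port h e ⊆ gridEdges (axisGrid (columns x)) :=
  Set.union_subset (trackEdges_subset_gridEdges hh) (Set.iUnion₂_subset fun u w =>
    Set.iUnion_subset fun _ => portEdges_subset_gridEdges (subset_columns x u) (port u w))

theorem reachable_routeEdges (x : V → ℤ) (port : V → V → Fin 6) {h : ℤ} (hh : 0 ≤ h) (u v : V) :
    (unitEdgeGraph (routeEdges x port h s(u, v))).Reachable ![x u, 0, 0] ![x v, 0, 0] := by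
  have hhub (a b : V) (hab : s(u, v) = s(a, b)) :
      (unitEdgeGraph (routeEdges x port h s(u, v))).Reachable ![x a, 0, 0] ![0, 0, h] := by
    refine (reachable_trackEdges_union_portEdges hh (X := columns x)
      (subset_columns x a) (port a b)).mono
      (unitEdgeGraph_mono (Set.union_subset_union_right _ ?_))
    exact fun q hq => Set.mem_iUnion₂.2 ⟨a, b, Set.mem_iUnion.2 ⟨hab, hq⟩⟩
  exact (hhub u v rfl).trans (hhub v u Sym2.eq_swap).symm

theorem exists_injOn_neighborSet {ι : Type*} [Finite ι] [Nonempty ι]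
    (hdeg : ∀ v, (G.neighborSet v).encard ≤ ENat.card ι) :
    ∃ port : V → V → ι, ∀ u, Set.InjOn (port u) (G.neighborSet u) := by
  have hinj (u : V) : ∃ p : V → ι, Set.InjOn p (G.neighborSet u) := by
    have hfin : (G.neighborSet u).Finite :=
      Set.encard_lt_top_iff.1 ((hdeg u).trans_lt ENat.card_lt_top_of_finite)
    obtain ⟨p, -, hp⟩ := hfin.exists_injOn_of_encard_le (t := Set.univ)
      ((hdeg u).trans_eq (Set.encard_univ ι).symm)
    exact ⟨p, hp⟩
  choose port hport using hinj
  exact ⟨port, hport⟩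

theorem LatticeDrawing.exists_on_axis {x : V → ℤ} (hx : Pairwise fun u v => 6 ≤ |x u - x v|)
    (hdeg : ∀ v, (G.neighborSet v).encard ≤ 6) :
    ∃ D : LatticeDrawing G, D.f = fun v => ![x v, 0, 0] := by
  have hxinj : Injective x := fun u v huv => by_contra fun hne => by simpa [huv] using hx hne
  have hx₄ : Pairwise fun u v => 4 < |x u - x v| :=
    hx.mono fun _ _ => lt_of_lt_of_le (by norm_num)
  have : Countable V := hxinj.countable
  obtain ⟨k, hk⟩ := exists_injective_nat G.edgeSet
  obtain ⟨port, hport⟩ := exists_injOn_neighborSet (ι := Fin 6) (by simpa using hdeg)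
  exact exists_of_disjoint_gridEdges (fun u v huv => hxinj (congrFun huv 0))
    (axisGrid_sparse (columns_sparse hx))
    (fun v => Fin.forall_fin_succ.2
      ⟨subset_columns x v (by simp), Fin.forall_fin_two.2 ⟨Even.zero, Even.zero⟩⟩)
    (E := fun e => routeEdges x port (2 * (k e + 1)) e)
    (fun e => routeEdges_subset_gridEdges x port (even_two_mul _) e)
    (fun e e' hee => disjoint_routeEdges hx₄ hport (by positivity) (by positivity)
      (by simpa using hk.ne hee) e.2 e'.2 (Subtype.coe_ne_coe.2 hee))
    (fun u v _ => reachable_routeEdges x port (by positivity) u v)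

end Routes

section Parity

theorem CubeAdj.odd_sum_add_sum {d : ℕ} {a b : Fin d → ℤ} (h : CubeAdj a b) :
    Odd (∑ i, a i + ∑ i, b i) := by
  obtain ⟨i, rfl | rfl⟩ := h <;> simp [Finset.sum_add_distrib, ← add_assoc]

theorem IsWire.isChain_cubeAdj {w : List (Fin 3 → ℤ)} (hw : IsWire w) : w.IsChain CubeAdj :=
  List.isChain_iff_getElem.2 fun i hi => (hw.2 ⟨i, by omega⟩ ⟨i + 1, hi⟩).2 (.inl rfl)

theorem even_length_iff_odd_sum_add_sum {d : ℕ} {w : List (Fin d → ℤ)} {a b : Fin d → ℤ}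
    (hw : w.IsChain CubeAdj) (ha : w.head? = some a) (hb : w.getLast? = some b) :
    Even w.length ↔ Odd (∑ i, a i + ∑ i, b i) := by
  induction w generalizing a with
  | nil => simp at ha
  | cons c w ih =>
    obtain rfl : c = a := by simpa using ha
    cases w with
    | nil =>
      obtain rfl : c = b := by simpa using hb
      simp [← two_mul]
    | cons c' w =>
      rw [List.isChain_cons_cons] at hw
      have hstep := hw.1.odd_sum_add_sum
      have hrest := ih hw.2 rfl (by simpa using hb)
      rw [List.length_cons, Nat.even_add_one, hrest]
      grind

end Parity

section Placement

variable {V : Type*}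

theorem exists_separated_modEq [Countable V] {m : ℤ} (hm : 0 < m) (N : ℕ) (r : V → ℤ) :
    ∃ x : V → ℤ, (Pairwise fun u v => N ≤ |x u - x v|) ∧ ∀ v, x v ≡ r v [ZMOD m] := by
  obtain ⟨n, hn⟩ := exists_injective_nat V
  refine ⟨fun v => m * ((N + 1) * n v) + r v % m, fun u v huv => ?_, fun v => ?_⟩
  · have hr : |r v % m - r u % m| < m :=
      abs_sub_lt_of_nonneg_of_lt (Int.emod_nonneg _ hm.ne') (Int.emod_lt_of_pos _ hm)
        (Int.emod_nonneg _ hm.ne') (Int.emod_lt_of_pos _ hm)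
    have hk : 1 ≤ |(n u : ℤ) - n v| :=
      Int.one_le_abs (sub_ne_zero.2 (Nat.cast_injective.ne (hn.ne huv)))
    calc (N : ℤ) ≤ m * (N + 1) * 1 - m := by nlinarith
      _ ≤ |m * (N + 1) * (n u - n v)| - |r v % m - r u % m| := by
        rw [abs_mul, abs_of_pos (by positivity : 0 < m * ((N : ℤ) + 1))]
        gcongr
      _ ≤ |m * (N + 1) * (n u - n v) - (r v % m - r u % m)| := abs_sub_abs_le_abs_sub _ _
      _ = _ := by congr 1; ring
  · simp [Int.ModEq]

variable {G : SimpleGraph V}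

theorem LatticeDrawing.odd_sum_add_sum {D : LatticeDrawing G}
    (hf : ∀ u v, G.Adj u v → Odd (∑ i, D.f u i + ∑ i, D.f v i)) (e : G.edgeSet)
    {a b : Fin 3 → ℤ} (ha : (D.wire e).head? = some a) (hb : (D.wire e).getLast? = some b) :
    Odd (∑ i, a i + ∑ i, b i) := by
  obtain ⟨u, v, he, hu, hv⟩ := D.wire_endpoints e
  obtain rfl : D.f u = a := Option.some_injective _ (hu.symm.trans ha)
  obtain rfl : D.f v = b := Option.some_injective _ (hv.symm.trans hb)
  exact hf u v ((SimpleGraph.mem_edgeSet G).1 (he ▸ e.2))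

theorem LatticeDrawing.even_length_wire {D : LatticeDrawing G}
    (hf : ∀ u v, G.Adj u v → Odd (∑ i, D.f u i + ∑ i, D.f v i)) (e : G.edgeSet) :
    Even (D.wire e).length := by
  obtain ⟨u, v, he, hu, hv⟩ := D.wire_endpoints e
  exact (even_length_iff_odd_sum_add_sum (D.wire_isWire e).isChain_cubeAdj hu hv).2
    (hf u v ((SimpleGraph.mem_edgeSet G).1 (he ▸ e.2)))

end Placement

theorem lattice_drawing_exists_general {V : Type*} [Countable V] (G : SimpleGraph V)
    (hdeg : ∀ v : V, (G.neighborSet v).encard ≤ 6) :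
    Nonempty (LatticeDrawing G) ∧
    (G.Colorable 2 → ∃ D : LatticeDrawing G,
      (∀ e : G.edgeSet, Even (D.wire e).length) ∧
      ∀ e : G.edgeSet, ∀ a b : Fin 3 → ℤ,
        (D.wire e).head? = some a → (D.wire e).getLast? = some b →
        Odd (a 0 + a 1 + a 2 + (b 0 + b 1 + b 2))) := by
  have hdraw (r : V → ℤ) : ∃ D : LatticeDrawing G, ∀ v, ∑ i, D.f v i ≡ r v [ZMOD 2] := by
    obtain ⟨x, hx, hxr⟩ := exists_separated_modEq two_pos 6 r
    obtain ⟨D, hD⟩ := LatticeDrawing.exists_on_axis hx hdeg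
    exact ⟨D, fun v => by simpa [hD, Fin.sum_univ_three] using hxr v⟩
  refine ⟨⟨(hdraw 0).choose⟩, ?_⟩
  rintro ⟨C⟩
  obtain ⟨D, hD⟩ := hdraw fun v => (C v : ℕ)
  have hodd (u v) (huv : G.Adj u v) : Odd (∑ i, D.f u i + ∑ i, D.f v i) := by
    have hne : (C u : ℕ) ≠ C v := Fin.val_ne_of_ne (C.valid huv)
    have hu := hD u
    have hv := hD v
    rw [Int.odd_iff]
    simp only [Int.ModEq] at hu hv
    omega
  refine ⟨D, LatticeDrawing.even_length_wire hodd, fun e a b ha hb => ?_⟩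
  simpa only [Fin.sum_univ_three] using LatticeDrawing.odd_sum_add_sum hodd e ha hb

/-- Every connected finite simple graph with maximum degree at most `6` has a lattice
drawing in `ℤ³`; moreover, if the graph is bipartite, the drawing can be chosen so
that the two endpoint cubes of every wire have opposite parity, equivalently every
wire has even length. -/
theorem lattice_drawing_exists {V : Type} [Fintype V] (G : SimpleGraph V)
    (hconn : G.Connected) (hdeg : ∀ v : V, (G.neighborSet v).ncard ≤ 6) :
    Nonempty (LatticeDrawing G) ∧
    (G.Colorable 2 → ∃ D : LatticeDrawing G,
      (∀ e : G.edgeSet, Even (D.wire e).length) ∧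
      ∀ e : G.edgeSet, ∀ a b : Fin 3 → ℤ,
        (D.wire e).head? = some a → (D.wire e).getLast? = some b →
        Odd (a 0 + a 1 + a 2 + (b 0 + b 1 + b 2))) := by
  exact lattice_drawing_exists_general G fun v =>
    (Set.toFinite (G.neighborSet v)).cast_ncard_eq ▸ Nat.cast_le.2 (hdeg v)
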